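/- arXiv:1403.2662 — 7 statements merged into one kernel-verified Lean document; each statement's English description precedes it below -/
import Mathlib

section
/- Let φ be a state on 𝒫 and let m ≥ 1. Suppose that every p ∈ 𝒫_{m]} which is φ-orthogonal to 𝒫_{m-1]} (i.e. φ((star q)·p) = 0 for all q ∈ 𝒫_{m-1]}) is a φ-null vector (i.e. φ((star p)·p) = 0). Then for every n ≥ m the same holds: every p ∈ 𝒫_{n]} that is φ-orthogonal to 𝒫_{n-1]} satisfies φ((star p)·p) = 0. -/
open MvPolynomial

/-- The `*`-operation on `MvPolynomial (Fin d) ℂ`: conjugation of coefficients. -/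
noncomputable def pstar {d : ℕ} (p : MvPolynomial (Fin d) ℂ) : MvPolynomial (Fin d) ℂ :=
  map (starRingEnd ℂ) p

lemma pstar_add {d : ℕ} (p q : MvPolynomial (Fin d) ℂ) : pstar (p + q) = pstar p + pstar q := by
  simp [pstar]

lemma pstar_C_mul {d : ℕ} (c : ℂ) (p : MvPolynomial (Fin d) ℂ) :
    pstar (C c * p) = C (starRingEnd ℂ c) * pstar p := by
  simp [pstar]

lemma pstar_pstar {d : ℕ} (p : MvPolynomial (Fin d) ℂ) : pstar (pstar p) = p := by
  ext s
  simp [pstar, coeff_map]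

lemma pstar_mem {d : ℕ} {n : ℕ} {p : MvPolynomial (Fin d) ℂ}
    (hp : p ∈ restrictTotalDegree (Fin d) ℂ n) : pstar p ∈ restrictTotalDegree (Fin d) ℂ n := by
  rw [mem_restrictTotalDegree] at *
  refine le_trans ?_ hp
  unfold pstar totalDegree
  exact Finset.sup_mono (support_map_subset _ _)

lemma quad_zero (x R : ℝ) (hR : 0 ≤ R) (h : ∀ t : ℝ, 0 ≤ t * x + t ^ 2 * R) : x = 0 := by
  have h1 := h (-x / (R + 1))
  have h2 : -x / (R + 1) * x + (-x / (R + 1)) ^ 2 * R = -(x / (R + 1)) ^ 2 := by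
    field_simp
    ring
  rw [h2] at h1
  have h3 : x / (R + 1) = 0 := by
    have := sq_nonneg (x / (R + 1))
    exact pow_eq_zero_iff (two_ne_zero) |>.1 (by linarith)
  rcases div_eq_zero_iff.1 h3 with h4 | h4
  · exact h4
  · linarith

lemma null_of {d : ℕ} (φ : MvPolynomial (Fin d) ℂ →ₗ[ℂ] ℂ)
    (hφpos : ∀ p, ∃ r : ℝ, 0 ≤ r ∧ φ (pstar p * p) = (r : ℂ))
    (q : MvPolynomial (Fin d) ℂ) (hq : φ (pstar q * q) = 0) (p : MvPolynomial (Fin d) ℂ) :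
    φ (p * q) = 0 := by
  suffices H : ∀ p, φ (pstar p * q) = 0 by
    have := H (pstar p)
    rwa [pstar_pstar] at this
  intro p
  obtain ⟨R, hR, hRe⟩ := hφpos p
  have hc : ∀ c : ℂ, φ (pstar (q + C c * p) * (q + C c * p)) =
      c * φ (pstar q * p) + starRingEnd ℂ c * φ (pstar p * q) + starRingEnd ℂ c * c * R := by
    intro c
    have : pstar (q + C c * p) * (q + C c * p) = pstar q * q + c • (pstar q * p) +
        (starRingEnd ℂ c) • (pstar p * q) + (starRingEnd ℂ c * c) • (pstar p * p) := by
      rw [pstar_add, pstar_C_mul]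
      simp only [smul_eq_C_mul, C_mul]
      ring
    rw [this]
    simp only [map_add, map_smul, smul_eq_mul, hq, hRe]
    ring
  have key : ∀ u : ℂ, starRingEnd ℂ u * u = 1 →
      u * φ (pstar q * p) + starRingEnd ℂ u * φ (pstar p * q) = 0 := by
    intro u hu
    set z := u * φ (pstar q * p) + starRingEnd ℂ u * φ (pstar p * q) with hz
    have hcz : ∀ t : ℝ, ∃ r : ℝ, 0 ≤ r ∧ (t : ℂ) * z + (t : ℂ) ^ 2 * R = r := by
      intro t
      obtain ⟨r, hr, e⟩ := hφpos (q + C (t * u) * p)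
      refine ⟨r, hr, ?_⟩
      rw [← e, hc, hz]
      simp only [map_mul, Complex.conj_ofReal]
      linear_combination (-(t : ℂ) ^ 2 * R) * hu
    have him : z.im = 0 := by
      obtain ⟨r, -, e⟩ := hcz 1
      have := congrArg Complex.im e
      simpa using this
    have hre : z.re = 0 := by
      apply quad_zero _ R hR
      intro t
      obtain ⟨r, hr, e⟩ := hcz t
      have := congrArg Complex.re e
      rw [← Complex.ofReal_pow, ← Complex.ofReal_mul] at this
      simp only [Complex.add_re, Complex.re_ofReal_mul, Complex.ofReal_re] at this
      linarith
    exact Complex.ext hre him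
  have k1 := key 1 (by simp)
  have k2 := key Complex.I (by simp)
  simp only [map_one, one_mul, Complex.conj_I] at k1 k2
  have : Complex.I * (φ (pstar q * p) - φ (pstar p * q)) = 0 := by linear_combination k2
  have h3 := (mul_eq_zero.1 this).resolve_left Complex.I_ne_zero
  linear_combination (1 / 2 : ℂ) * k1 - (1 / 2 : ℂ) * h3

/-- The null ideal as a submodule. -/
def nullSub {d : ℕ} (φ : MvPolynomial (Fin d) ℂ →ₗ[ℂ] ℂ) :
    Submodule ℂ (MvPolynomial (Fin d) ℂ) where
  carrier := {q | ∀ p, φ (p * q) = 0}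
  zero_mem' := by intro p; simp
  add_mem' := by
    intro a b ha hb p
    rw [mul_add, map_add, ha p, hb p, add_zero]
  smul_mem' := by
    intro c a ha p
    rw [mul_smul_comm, map_smul, ha p, smul_zero]

lemma fin_rtd (d n : ℕ) : FiniteDimensional ℂ (restrictTotalDegree (Fin d) ℂ n) := by
  have hfin : Set.Finite {s : Fin d →₀ ℕ | s.degree ≤ n} := by
    have := Finsupp.finite_of_degree_le (σ := Fin d) n
    exact this
  have hle : restrictTotalDegree (Fin d) ℂ n ≤ Submodule.span ℂ
      ((fun s => monomial s (1 : ℂ)) '' {s : Fin d →₀ ℕ | s.degree ≤ n}) := by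
    intro p hp
    rw [mem_restrictTotalDegree] at hp
    rw [p.as_sum]
    refine Submodule.sum_mem _ fun s hs => ?_
    have : monomial s (coeff s p) = coeff s p • monomial s (1 : ℂ) := by
      simp [smul_monomial]
    rw [this]
    refine Submodule.smul_mem _ _ (Submodule.subset_span ⟨s, ?_, rfl⟩)
    exact (le_totalDegree hs).trans hp
  have := FiniteDimensional.span_of_finite ℂ (hfin.image (fun s => monomial s (1 : ℂ)))
  exact Submodule.finiteDimensional_of_le hle

lemma exists_proj {d : ℕ} (φ : MvPolynomial (Fin d) ℂ →ₗ[ℂ] ℂ)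
    (hφpos : ∀ p, ∃ r : ℝ, 0 ≤ r ∧ φ (pstar p * p) = (r : ℂ))
    (n : ℕ) (p : MvPolynomial (Fin d) ℂ) :
    ∃ w ∈ restrictTotalDegree (Fin d) ℂ n, ∀ q ∈ restrictTotalDegree (Fin d) ℂ n,
      φ (q * (p - w)) = 0 := by
  have := fin_rtd d n
  set W := restrictTotalDegree (Fin d) ℂ n with hW
  let B : MvPolynomial (Fin d) ℂ →ₗ[ℂ] MvPolynomial (Fin d) ℂ →ₗ[ℂ] ℂ :=
    (LinearMap.mul ℂ (MvPolynomial (Fin d) ℂ)).compr₂ φ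
  have hB : ∀ a b, B a b = φ (a * b) := fun a b => rfl
  let T : W →ₗ[ℂ] Module.Dual ℂ W := B.domRestrict₁₂ W W
  have hT : ∀ a b : W, T a b = φ (a * b) := fun a b => rfl
  let f : Module.Dual ℂ W := (B p).comp W.subtype
  have hf : ∀ a : W, f a = φ (p * a) := fun a => rfl
  have hmem : f ∈ (LinearMap.ker T).dualAnnihilator := by
    rw [Submodule.mem_dualAnnihilator]
    intro q hq
    rw [LinearMap.mem_ker] at hq
    rw [hf]
    apply null_of φ hφpos
    have := hT q ⟨pstar q, pstar_mem q.2⟩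
    rw [hq] at this
    rw [mul_comm]
    exact this.symm
  rw [← LinearMap.range_dualMap_eq_dualAnnihilator_ker] at hmem
  obtain ⟨g, hg⟩ := hmem
  obtain ⟨w, rfl⟩ := (Module.evalEquiv ℂ W).surjective g
  refine ⟨w, w.2, fun q hq => ?_⟩
  have := LinearMap.congr_fun hg ⟨q, hq⟩
  rw [hf] at this
  have h2 : φ (q * w) = φ (p * q) := this
  rw [mul_sub, map_sub, h2, mul_comm q p, sub_self]

lemma step {d : ℕ} (φ : MvPolynomial (Fin d) ℂ →ₗ[ℂ] ℂ) (k : ℕ)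
    (ih : restrictTotalDegree (Fin d) ℂ (k + 1) ≤ restrictTotalDegree (Fin d) ℂ k ⊔ nullSub φ) :
    restrictTotalDegree (Fin d) ℂ (k + 2) ≤
      restrictTotalDegree (Fin d) ℂ (k + 1) ⊔ nullSub φ := by
  intro p hp
  rw [mem_restrictTotalDegree] at hp
  rw [p.as_sum]
  refine Submodule.sum_mem _ fun s hs => ?_
  have hs' : s.degree ≤ k + 2 := (le_totalDegree hs).trans hp
  generalize coeff s p = c
  have hmon : ∀ (t : Fin d →₀ ℕ) (N : ℕ), t.degree ≤ N →
      monomial t c ∈ restrictTotalDegree (Fin d) ℂ N := by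
    intro t N ht
    rw [mem_restrictTotalDegree]
    exact (totalDegree_monomial_le t c).trans ht
  by_cases h0 : s = 0
  · exact Submodule.mem_sup_left (hmon s _ (by simp [h0]))
  obtain ⟨i, hi⟩ := Finsupp.ne_iff.1 h0
  have hle : Finsupp.single i 1 ≤ s := by
    rw [Finsupp.single_le_iff]
    exact Nat.one_le_iff_ne_zero.2 hi
  obtain ⟨t, rfl⟩ := exists_add_of_le hle
  have ht : t.degree ≤ k + 1 := by
    rw [map_add, Finsupp.degree_single] at hs'
    omega
  obtain ⟨a, ha, z, hz, e⟩ := Submodule.mem_sup.1 (ih (hmon t _ ht))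
  have e2 : monomial (Finsupp.single i 1 + t) c = X i * a + X i * z := by
    rw [← mul_add, e, X, monomial_mul, one_mul]
  rw [e2]
  refine Submodule.add_mem_sup ?_ ?_
  · rw [mem_restrictTotalDegree] at *
    refine (totalDegree_mul _ _).trans ?_
    rw [totalDegree_X]
    omega
  · intro r
    rw [← mul_assoc]
    exact hz _

/-- If, for a state `φ` and some `m ≥ 1`, every element of `𝒫_{m]}` orthogonal to
`𝒫_{m-1]}` is `φ`-null, then the same holds at every level `n ≥ m`. -/
theorem stmt_8 (d : ℕ) (hd : 1 ≤ d)
    (φ : MvPolynomial (Fin d) ℂ →ₗ[ℂ] ℂ) (hφ1 : φ 1 = 1)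
    (hφpos : ∀ p, ∃ r : ℝ, 0 ≤ r ∧ φ (pstar p * p) = (r : ℂ))
    (m : ℕ) (hm : 1 ≤ m)
    (h : ∀ p ∈ restrictTotalDegree (Fin d) ℂ m,
      (∀ q ∈ restrictTotalDegree (Fin d) ℂ (m - 1), φ (pstar q * p) = 0) →
      φ (pstar p * p) = 0) :
    ∀ n, m ≤ n → ∀ p ∈ restrictTotalDegree (Fin d) ℂ n,
      (∀ q ∈ restrictTotalDegree (Fin d) ℂ (n - 1), φ (pstar q * p) = 0) →
      φ (pstar p * p) = 0 := by
  obtain ⟨m, rfl⟩ : ∃ k, m = k + 1 := ⟨m - 1, by omega⟩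
  have key : ∀ k, m ≤ k → restrictTotalDegree (Fin d) ℂ (k + 1) ≤
      restrictTotalDegree (Fin d) ℂ k ⊔ nullSub φ := by
    intro k hk
    induction k, hk using Nat.le_induction with
    | base =>
      intro p hp
      obtain ⟨w, hw, ho⟩ := exists_proj φ hφpos m p
      have hw' : w ∈ restrictTotalDegree (Fin d) ℂ (m + 1) := by
        rw [mem_restrictTotalDegree] at *
        omega
      have hz := h (p - w) (Submodule.sub_mem _ hp hw') (fun q hq => ho _ (pstar_mem hq))
      have : p = w + (p - w) := by ring
      rw [this]
      exact Submodule.add_mem_sup hw (null_of φ hφpos _ hz)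
    | succ k hk ih => exact step φ k ih
  intro n hn p hp ho
  obtain ⟨n, rfl⟩ : ∃ k, n = k + 1 := ⟨n - 1, by omega⟩
  obtain ⟨a, ha, z, hz, e⟩ := Submodule.mem_sup.1 (key n (by omega) hp)
  have hzs : φ (p * pstar z) = 0 := by
    apply null_of φ hφpos
    rw [pstar_pstar, mul_comm]
    exact hz _
  have h1 : pstar p * p = pstar a * p + p * pstar z := by
    conv_lhs => rw [← e, pstar_add, e]
    ring
  rw [h1, map_add, ho a ha, hzs, add_zero]
end

section
/- (Symmetric Jacobi relation.) Let φ be a state on 𝒫, let m, n ∈ ℕ with |m − n| > 1, and let j ∈ {1,…,d}. If p ∈ 𝒫_{m]} is φ-orthogonal to 𝒫_{m-1]} and q ∈ 𝒫_{n]} is φ-orthogonal to 𝒫_{n-1]}, then φ((star p)·X_j·q) = 0. Consequently, for such orthogonal components, the multiplication operator by X_j has only three nonzero diagonals with respect to the φ-orthogonal gradation. -/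
open MvPolynomial

/-- Symmetric Jacobi relation: for a state `φ` and `|m - n| > 1`, if `p ∈ 𝒫_{m]}` is
`φ`-orthogonal to `𝒫_{m-1]}` and `q ∈ 𝒫_{n]}` is `φ`-orthogonal to `𝒫_{n-1]}`, then
`φ(p* · X_j · q) = 0`; the multiplication by `X_j` is three-diagonal with respect to
the `φ`-orthogonal gradation. Here `𝒫_{-1]} = 0`. -/
theorem stmt_9 (d : ℕ) (hd : 1 ≤ d)
    (φ : MvPolynomial (Fin d) ℂ →ₗ[ℂ] ℂ) (hφ1 : φ 1 = 1)
    (hφpos : ∀ p, ∃ r : ℝ, 0 ≤ r ∧ φ (pstar p * p) = (r : ℂ))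
    (m n : ℕ) (hmn : 1 < |(m : ℤ) - (n : ℤ)|) (j : Fin d)
    (p q : MvPolynomial (Fin d) ℂ)
    (hp : p ∈ restrictTotalDegree (Fin d) ℂ m)
    (hp' : ∀ u ∈ (if m = 0 then (⊥ : Submodule ℂ (MvPolynomial (Fin d) ℂ))
      else restrictTotalDegree (Fin d) ℂ (m - 1)), φ (pstar u * p) = 0)
    (hq : q ∈ restrictTotalDegree (Fin d) ℂ n)
    (hq' : ∀ u ∈ (if n = 0 then (⊥ : Submodule ℂ (MvPolynomial (Fin d) ℂ))
      else restrictTotalDegree (Fin d) ℂ (n - 1)), φ (pstar u * q) = 0) :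
    φ (pstar p * (X j * q)) = 0 := by
  have hX : ∀ (k : ℕ) (r : MvPolynomial (Fin d) ℂ), r ∈ restrictTotalDegree (Fin d) ℂ k →
      ∀ l, k + 2 ≤ l → X j * r ∈ (if l = 0 then (⊥ : Submodule ℂ (MvPolynomial (Fin d) ℂ))
        else restrictTotalDegree (Fin d) ℂ (l - 1)) := by
    intro k r hr l hl
    rw [if_neg (by omega), mem_restrictTotalDegree]
    rw [mem_restrictTotalDegree] at hr
    have h1 := totalDegree_mul (X j : MvPolynomial (Fin d) ℂ) r
    have h2 : (X j : MvPolynomial (Fin d) ℂ).totalDegree = 1 := totalDegree_X j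
    omega
  have hcases : m + 2 ≤ n ∨ n + 2 ≤ m := by
    rcases lt_abs.mp hmn with h | h <;> omega
  rcases hcases with h | h
  · have := hq' _ (hX m p hp n h)
    rw [← this]
    congr 1
    simp only [pstar, map_mul, map_X]
    ring
  · have hy := hp' _ (hX n q hq m h)
    set a : MvPolynomial (Fin d) ℂ := X j * q with ha
    obtain ⟨r1, -, h1⟩ := hφpos p
    obtain ⟨r2, -, h2⟩ := hφpos a
    obtain ⟨r3, -, h3⟩ := hφpos (p + a)
    obtain ⟨r4, -, h4⟩ := hφpos (p + C Complex.I * a)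
    have e3 : pstar (p + a) * (p + a)
        = pstar p * p + pstar p * a + pstar a * p + pstar a * a := by
      simp only [pstar, map_add]
      ring
    have hI : (C Complex.I * C Complex.I : MvPolynomial (Fin d) ℂ) = -1 := by
      rw [← C_mul, Complex.I_mul_I, C_neg, C_1]
    have e4 : pstar (p + C Complex.I * a) * (p + C Complex.I * a)
        = pstar p * p + Complex.I • (pstar p * a) - Complex.I • (pstar a * p)
          + pstar a * a := by
      simp only [pstar, map_add, map_mul, map_C, Complex.conj_I, C_neg, smul_eq_C_mul]
      linear_combination (-(map (starRingEnd ℂ) a * a)) * hI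
    rw [e3] at h3
    rw [e4] at h4
    simp only [map_add, map_sub, map_smul, h1, h2, hy, smul_eq_mul] at h3 h4
    have i3 := congrArg Complex.im h3
    have i4 := congrArg Complex.im h4
    simp at i3 i4
    exact Complex.ext (by simpa using i4) (by simpa using i3)
end

section
/- (Quantum decomposition.) Let φ be a state on 𝒫 and let (𝒫_k)_{k∈ℕ} be a family of submodules that are mutually φ-orthogonal (φ((star p)·q) = 0 for p ∈ 𝒫_l, q ∈ 𝒫_k, l ≠ k) and satisfy ⨆_{k≤n} 𝒫_k = 𝒫_{n]} for every n. Then for every n ∈ ℕ, every q ∈ 𝒫_n and every j ∈ {1,…,d} there exist p_{n+1} ∈ 𝒫_{n+1}, p_n ∈ 𝒫_n, p_{n-1} ∈ 𝒫_{n-1} (with 𝒫_{-1} = 0) and r ∈ 𝒫_{n-2]} with φ((star r)·r) = 0 such that X_j·q = p_{n+1} + p_n + p_{n-1} + r. -/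
open MvPolynomial

lemma aux_zero {d : ℕ} (P : ℕ → Submodule ℂ (MvPolynomial (Fin d) ℂ))
    (hfil : ∀ n, (⨆ k ≤ n, P k) = restrictTotalDegree (Fin d) ℂ n) :
    restrictTotalDegree (Fin d) ℂ 0 = P 0 := by
  rw [← hfil]; simp

lemma aux_split {d : ℕ} (P : ℕ → Submodule ℂ (MvPolynomial (Fin d) ℂ))
    (hfil : ∀ n, (⨆ k ≤ n, P k) = restrictTotalDegree (Fin d) ℂ n) (n : ℕ)
    (x : MvPolynomial (Fin d) ℂ) (hx : x ∈ restrictTotalDegree (Fin d) ℂ (n + 1)) :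
    ∃ a ∈ P (n + 1), ∃ b ∈ restrictTotalDegree (Fin d) ℂ n, x = a + b := by
  have h : restrictTotalDegree (Fin d) ℂ (n + 1) ≤
      P (n + 1) ⊔ restrictTotalDegree (Fin d) ℂ n := by
    rw [← hfil, ← hfil]
    refine iSup₂_le fun k hk => ?_
    rcases Nat.lt_or_ge n k with h | h
    · obtain rfl : k = n + 1 := by omega
      exact le_sup_left
    · exact le_sup_of_le_right (le_iSup₂_of_le k h le_rfl)
  obtain ⟨a, ha, b, hb, hab⟩ := Submodule.mem_sup.1 (h hx)
  exact ⟨a, ha, b, hb, hab.symm⟩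

lemma aux_orth {d : ℕ} (φ : MvPolynomial (Fin d) ℂ →ₗ[ℂ] ℂ)
    (P : ℕ → Submodule ℂ (MvPolynomial (Fin d) ℂ))
    (horth : ∀ l k, l ≠ k → ∀ p ∈ P l, ∀ q ∈ P k, φ (pstar p * q) = 0)
    (hfil : ∀ n, (⨆ k ≤ n, P k) = restrictTotalDegree (Fin d) ℂ n) (k : ℕ)
    (y : MvPolynomial (Fin d) ℂ) (hy : y ∈ P k) (m : ℕ) (hm : m < k) :
    ∀ x ∈ restrictTotalDegree (Fin d) ℂ m, φ (pstar x * y) = 0 := by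
  induction m with
  | zero =>
    intro x hx
    rw [aux_zero P hfil] at hx
    exact horth 0 k (by omega) x hx y hy
  | succ m ih =>
    intro x hx
    obtain ⟨a, ha, b, hb, rfl⟩ := aux_split P hfil m x hx
    have h1 := horth (m + 1) k (by omega) a ha y hy
    have h2 := ih (by omega) b hb
    have h3 : pstar (a + b) * y = pstar a * y + pstar b * y := by
      simp only [pstar, map_add, add_mul]
    rw [h3, map_add, h1, h2, add_zero]

lemma aux_X {d : ℕ} (n : ℕ) (x : MvPolynomial (Fin d) ℂ)
    (hx : x ∈ restrictTotalDegree (Fin d) ℂ n) (j : Fin d) :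
    X j * x ∈ restrictTotalDegree (Fin d) ℂ (n + 1) := by
  rw [mem_restrictTotalDegree] at *
  have h := totalDegree_mul (X j) x
  rw [totalDegree_X] at h
  omega

/-- Quantum decomposition: if `(𝒫_k)` are mutually `φ`-orthogonal submodules with
`⨆_{k ≤ n} 𝒫_k = 𝒫_{n]}`, then for `q ∈ 𝒫_n` and any coordinate `X_j` one can write
`X_j·q = p_{n+1} + p_n + p_{n-1} + r` with `p_k ∈ 𝒫_k` (and `𝒫_{-1} = 0`) and
`r ∈ 𝒫_{n-2]}` a `φ`-null vector. -/
theorem stmt_10 (d : ℕ) (hd : 1 ≤ d)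
    (φ : MvPolynomial (Fin d) ℂ →ₗ[ℂ] ℂ) (hφ1 : φ 1 = 1)
    (hφpos : ∀ p, ∃ r : ℝ, 0 ≤ r ∧ φ (pstar p * p) = (r : ℂ))
    (P : ℕ → Submodule ℂ (MvPolynomial (Fin d) ℂ))
    (horth : ∀ l k, l ≠ k → ∀ p ∈ P l, ∀ q ∈ P k, φ (pstar p * q) = 0)
    (hfil : ∀ n, (⨆ k ≤ n, P k) = restrictTotalDegree (Fin d) ℂ n)
    (n : ℕ) (q : MvPolynomial (Fin d) ℂ) (hq : q ∈ P n) (j : Fin d) :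
    ∃ p1 ∈ P (n + 1), ∃ p2 ∈ P n,
      ∃ p3 ∈ (if n = 0 then (⊥ : Submodule ℂ (MvPolynomial (Fin d) ℂ)) else P (n - 1)),
        ∃ r ∈ (if n ≤ 1 then (⊥ : Submodule ℂ (MvPolynomial (Fin d) ℂ))
            else restrictTotalDegree (Fin d) ℂ (n - 2)),
          φ (pstar r * r) = 0 ∧ X j * q = p1 + p2 + p3 + r := by
  have hqD : q ∈ restrictTotalDegree (Fin d) ℂ n := by
    rw [← hfil]
    exact (le_iSup₂_of_le (f := fun k (_ : k ≤ n) => P k) n le_rfl le_rfl) hq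
  obtain ⟨p1, hp1, b, hb, h1⟩ := aux_split P hfil n _ (aux_X n q hqD j)
  rcases n with _ | _ | m
  · rw [aux_zero P hfil] at hb
    exact ⟨p1, hp1, b, hb, 0, by simp, 0, by simp, by simp, by simpa using h1⟩
  · obtain ⟨p2, hp2, c, hc, rfl⟩ := aux_split P hfil 0 b hb
    rw [aux_zero P hfil] at hc
    exact ⟨p1, hp1, p2, hp2, c, by simpa using hc, 0, by simp, by simp, by rw [h1]; ring⟩
  · obtain ⟨p2, hp2, c, hc, rfl⟩ := aux_split P hfil (m + 1) b hb
    obtain ⟨p3, hp3, r, hr, rfl⟩ := aux_split P hfil m c hc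
    refine ⟨p1, hp1, p2, hp2, p3, by simpa using hp3, r, by simpa using hr, ?_,
      by rw [h1]; ring⟩
    have o := aux_orth φ P horth hfil
    have e1 := o _ p1 hp1 m (by omega) r hr
    have e2 := o _ p2 hp2 m (by omega) r hr
    have e3 := o _ p3 hp3 m (by omega) r hr
    have e0 := o _ q hq (m + 1) (by omega) _ (aux_X m r hr j)
    have e : pstar (X j * r) * q = pstar r * p1 + pstar r * p2 + pstar r * p3 + pstar r * r := by
      have : pstar (X j * r) = X j * pstar r := by simp [pstar]
      rw [this, mul_comm (X j), mul_assoc, h1]; ring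
    rw [e] at e0
    simpa [map_add, e1, e2, e3] using e0
end

section
/- Let φ be a state on 𝒫 and let (𝒫_k)_{k∈ℕ} be a family of submodules that are mutually φ-orthogonal and satisfy ⨆_{k≤n} 𝒫_k = 𝒫_{n]} for every n. If ξ ∈ 𝒫_{n+1} satisfies φ((star ξ)·X_j·q) = 0 for every j ∈ {1,…,d} and every q ∈ 𝒫_n, then ξ is a φ-null vector: φ((star ξ)·ξ) = 0. (Thus, up to null vectors, the images of 𝒫_n under the creation parts of the coordinates span 𝒫_{n+1}.) -/
open MvPolynomial

/-- If `(𝒫_k)` is a mutually `φ`-orthogonal family with `⨆_{k ≤ n} 𝒫_k = 𝒫_{n]}` and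
`ξ ∈ 𝒫_{n+1}` is `φ`-orthogonal to `X_j·𝒫_n` for every coordinate `j`, then `ξ` is a
`φ`-null vector: up to null vectors the creators applied to `𝒫_n` span `𝒫_{n+1}`. -/
theorem stmt_11 (d : ℕ) (hd : 1 ≤ d)
    (φ : MvPolynomial (Fin d) ℂ →ₗ[ℂ] ℂ) (hφ1 : φ 1 = 1)
    (hφpos : ∀ p, ∃ r : ℝ, 0 ≤ r ∧ φ (pstar p * p) = (r : ℂ))
    (P : ℕ → Submodule ℂ (MvPolynomial (Fin d) ℂ))
    (horth : ∀ l k, l ≠ k → ∀ p ∈ P l, ∀ q ∈ P k, φ (pstar p * q) = 0)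
    (hfil : ∀ n, (⨆ k ≤ n, P k) = restrictTotalDegree (Fin d) ℂ n)
    (n : ℕ) (ξ : MvPolynomial (Fin d) ℂ) (hξ : ξ ∈ P (n + 1))
    (horthX : ∀ (j : Fin d), ∀ q ∈ P n, φ (pstar ξ * (X j * q)) = 0) :
    φ (pstar ξ * ξ) = 0 := by
  classical
  let K : Submodule ℂ (MvPolynomial (Fin d) ℂ) :=
    LinearMap.ker (φ ∘ₗ LinearMap.mulLeft ℂ (pstar ξ))
  have hK : ∀ q, q ∈ K ↔ φ (pstar ξ * q) = 0 := fun q => by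
    simp [K, LinearMap.mem_ker]
  have hlow : restrictTotalDegree (Fin d) ℂ n ≤ K := by
    rw [← hfil n]
    refine iSup₂_le fun k hk q hq => (hK q).2 ?_
    exact horth (n + 1) k (by omega) ξ hξ q hq
  have hX : ∀ j : Fin d, ∀ q ∈ restrictTotalDegree (Fin d) ℂ n, X j * q ∈ K := by
    intro j
    have : restrictTotalDegree (Fin d) ℂ n ≤ K.comap (LinearMap.mulLeft ℂ (X j)) := by
      rw [← hfil n]
      refine iSup₂_le fun k hk q hq => ?_
      rw [Submodule.mem_comap, LinearMap.mulLeft_apply]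
      rcases Nat.lt_or_ge k n with h | h
      · apply hlow
        have hq' : q ∈ restrictTotalDegree (Fin d) ℂ k := by
          rw [← hfil k]
          exact (le_iSup₂_of_le (f := fun i (_ : i ≤ k) => P i) k le_rfl le_rfl) hq
        rw [mem_restrictTotalDegree] at hq' ⊢
        have h1 := totalDegree_mul (X j : MvPolynomial (Fin d) ℂ) q
        rw [totalDegree_X] at h1
        omega
      · obtain rfl : k = n := le_antisymm hk h
        exact (hK _).2 (horthX j q hq)
    exact fun q hq => this hq
  have hξ' : ξ ∈ restrictTotalDegree (Fin d) ℂ (n + 1) := by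
    rw [← hfil (n + 1)]
    exact (le_iSup₂_of_le (f := fun i (_ : i ≤ n + 1) => P i) (n + 1) le_rfl le_rfl) hξ
  rw [mem_restrictTotalDegree] at hξ'
  rw [← hK]
  have key : ∑ m ∈ ξ.support, monomial m (coeff m ξ) ∈ K := by
    refine Submodule.sum_mem _ fun m hm => ?_
    have hdeg : m.degree ≤ n + 1 := by
      have := (le_totalDegree hm).trans hξ'
      exact this
    have hmon : ∀ (m' : Fin d →₀ ℕ) (c : ℂ), m'.degree ≤ n →
        monomial m' c ∈ restrictTotalDegree (Fin d) ℂ n := by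
      intro m' c h
      rw [mem_restrictTotalDegree]
      refine (totalDegree_monomial_le m' c).trans ?_
      exact h
    by_cases h : m.degree ≤ n
    · exact hlow (hmon m _ h)
    · have hm0 : m ≠ 0 := by
        rintro rfl
        simp at h
      obtain ⟨j, hj⟩ := Finsupp.ne_iff.1 hm0
      have hle : Finsupp.single j 1 ≤ m := by
        rw [Finsupp.single_le_iff]
        exact Nat.one_le_iff_ne_zero.2 hj
      obtain ⟨m', rfl⟩ := exists_add_of_le hle
      have e : monomial (Finsupp.single j 1 + m') (coeff (Finsupp.single j 1 + m') ξ)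
          = X j * monomial m' (coeff (Finsupp.single j 1 + m') ξ) := by
        rw [X, monomial_mul, one_mul]
      rw [e]
      refine hX j _ (hmon m' _ ?_)
      rw [map_add, Finsupp.degree_single] at hdeg
      omega
  rwa [← ξ.as_sum] at key
end

section
/- (Commutativity of creators.) Let (𝒫_k)_{k∈ℕ} be an independent family of submodules of 𝒫 with ⨆_k 𝒫_k = 𝒫, such that for all j ∈ {1,…,d} and all m ∈ ℕ one has X_j·𝒫_m ⊆ 𝒫_{m+1} ⊔ 𝒫_m ⊔ 𝒫_{m-1} (with 𝒫_{-1} = 0), and let π_k : 𝒫 → 𝒫_k denote the projection onto the k-th summand along this direct sum decomposition. Then for all j, k ∈ {1,…,d}, all n ∈ ℕ and all q ∈ 𝒫_n: π_{n+2}(X_j·π_{n+1}(X_k·q)) = π_{n+2}(X_k·π_{n+1}(X_j·q)). -/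
open MvPolynomial

/-- Commutativity of creators: if `𝒫 = ⊕_k 𝒫_k` is a direct sum decomposition such
that each `X_j·𝒫_m ⊆ 𝒫_{m+1} ⊔ 𝒫_m ⊔ 𝒫_{m-1}`, and `π_k` are the projections onto
the summands, then `π_{n+2}(X_j·π_{n+1}(X_k·q)) = π_{n+2}(X_k·π_{n+1}(X_j·q))` for
every `q ∈ 𝒫_n`, i.e. `a⁺_j a⁺_k = a⁺_k a⁺_j`. -/
theorem stmt_13 (d : ℕ) (hd : 1 ≤ d)
    (P : ℕ → Submodule ℂ (MvPolynomial (Fin d) ℂ))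
    (hind : iSupIndep P) (hsup : (⨆ k, P k) = ⊤)
    (hjac : ∀ (j : Fin d) (m : ℕ), ∀ p ∈ P m,
      X j * p ∈ P (m + 1) ⊔ P m ⊔
        (if m = 0 then (⊥ : Submodule ℂ (MvPolynomial (Fin d) ℂ)) else P (m - 1)))
    (π : ℕ → MvPolynomial (Fin d) ℂ →ₗ[ℂ] MvPolynomial (Fin d) ℂ)
    (hπmem : ∀ k p, π k p ∈ P k)
    (hπid : ∀ k, ∀ p ∈ P k, π k p = p)
    (hπ0 : ∀ k l, k ≠ l → ∀ p ∈ P l, π k p = 0)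
    (j k : Fin d) (n : ℕ) (q : MvPolynomial (Fin d) ℂ) (hq : q ∈ P n) :
    π (n + 2) (X j * π (n + 1) (X k * q)) = π (n + 2) (X k * π (n + 1) (X j * q)) := by
  have dec : ∀ (j : Fin d) (m : ℕ), ∀ p ∈ P m, ∃ a ∈ P (m + 1), ∃ b ∈ P m, ∃ c,
      (c = 0 ∨ (m ≠ 0 ∧ c ∈ P (m - 1))) ∧ X j * p = a + b + c := by
    intro j m p hp
    obtain ⟨y, hy, c, hc, h⟩ := Submodule.mem_sup.1 (hjac j m p hp)
    obtain ⟨a, ha, b, hb, rfl⟩ := Submodule.mem_sup.1 hy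
    refine ⟨a, ha, b, hb, c, ?_, h.symm⟩
    split_ifs at hc with h0
    · exact Or.inl ((Submodule.mem_bot ℂ).1 hc)
    · exact Or.inr ⟨h0, hc⟩
  have van : ∀ (j : Fin d) (m N : ℕ), m + 2 ≤ N → ∀ p ∈ P m, π N (X j * p) = 0 := by
    intro j m N hN p hp
    obtain ⟨a, ha, b, hb, c, hc, h⟩ := dec j m p hp
    rw [h, map_add, map_add, hπ0 N (m + 1) (by omega) a ha, hπ0 N m (by omega) b hb]
    rcases hc with rfl | ⟨_, hc⟩
    · simp
    · simp [hπ0 N (m - 1) (by omega) c hc]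
  have key : ∀ j k : Fin d,
      π (n + 2) (X j * π (n + 1) (X k * q)) = π (n + 2) (X j * (X k * q)) := by
    intro j k
    obtain ⟨a, ha, b, hb, c, hc, h⟩ := dec k n q hq
    have hc1 : π (n + 1) c = 0 := by
      rcases hc with rfl | ⟨_, hc⟩
      · simp
      · exact hπ0 _ (n - 1) (by omega) c hc
    have hc2 : π (n + 2) (X j * c) = 0 := by
      rcases hc with rfl | ⟨_, hc⟩
      · simp
      · exact van j (n - 1) _ (by omega) c hc
    rw [h, map_add, map_add, hπid _ a ha, hπ0 (n + 1) n (by omega) b hb, hc1, add_zero, add_zero, mul_add, mul_add,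
      map_add, map_add, hc2, van j n _ le_rfl b hb]
    simp
  rw [key, key, mul_left_comm]
end

section
/- Let (𝒫_k)_{k∈ℕ} be an independent family of submodules of 𝒫 with ⨆_k 𝒫_k = 𝒫, such that for all j ∈ {1,…,d} and all m ∈ ℕ one has X_j·𝒫_m ⊆ 𝒫_{m+1} ⊔ 𝒫_m ⊔ 𝒫_{m-1} (with 𝒫_{-1} = 0), and let π_k denote the projection onto 𝒫_k along this decomposition. Then for all j, k ∈ {1,…,d}, all n ∈ ℕ and all q ∈ 𝒫_n: π_{n+1}(X_j·π_{n+1}(X_k·q)) + π_{n+1}(X_j·π_n(X_k·q)) = π_{n+1}(X_k·π_{n+1}(X_j·q)) + π_{n+1}(X_k·π_n(X_j·q)). (This is the relation [a⁺_j, a⁰_k] + [a⁰_j, a⁺_k] = 0 for the creation and preservation parts of the coordinates.) -/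
open MvPolynomial

/-- The relation `[a⁺_j, a⁰_k] + [a⁰_j, a⁺_k] = 0` for the creation and preservation
parts of the coordinates, with respect to a direct sum decomposition `𝒫 = ⊕_k 𝒫_k`
such that each `X_j·𝒫_m ⊆ 𝒫_{m+1} ⊔ 𝒫_m ⊔ 𝒫_{m-1}`, `π_k` being the projections. -/
theorem stmt_14 (d : ℕ) (hd : 1 ≤ d)
    (P : ℕ → Submodule ℂ (MvPolynomial (Fin d) ℂ))
    (hind : iSupIndep P) (hsup : (⨆ k, P k) = ⊤)
    (hjac : ∀ (j : Fin d) (m : ℕ), ∀ p ∈ P m,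
      X j * p ∈ P (m + 1) ⊔ P m ⊔
        (if m = 0 then (⊥ : Submodule ℂ (MvPolynomial (Fin d) ℂ)) else P (m - 1)))
    (π : ℕ → MvPolynomial (Fin d) ℂ →ₗ[ℂ] MvPolynomial (Fin d) ℂ)
    (hπmem : ∀ k p, π k p ∈ P k)
    (hπid : ∀ k, ∀ p ∈ P k, π k p = p)
    (hπ0 : ∀ k l, k ≠ l → ∀ p ∈ P l, π k p = 0)
    (j k : Fin d) (n : ℕ) (q : MvPolynomial (Fin d) ℂ) (hq : q ∈ P n) :
    π (n + 1) (X j * π (n + 1) (X k * q)) + π (n + 1) (X j * π n (X k * q)) =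
      π (n + 1) (X k * π (n + 1) (X j * q)) + π (n + 1) (X k * π n (X j * q)) := by
  have dec : ∀ (i : Fin d) (m : ℕ), ∀ p ∈ P m, ∃ a ∈ P (m + 1), ∃ b ∈ P m, ∃ c,
      (c = 0 ∨ ∃ l, m = l + 1 ∧ c ∈ P l) ∧ X i * p = a + b + c := by
    intro i m p hp
    obtain ⟨y, hy, c, hc, h⟩ := Submodule.mem_sup.1 (hjac i m p hp)
    obtain ⟨a, ha, b, hb, h'⟩ := Submodule.mem_sup.1 hy
    refine ⟨a, ha, b, hb, c, ?_, by rw [h', h]⟩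
    rcases m with _ | l
    · left
      simpa using hc
    · right
      exact ⟨l, rfl, by simpa using hc⟩
  -- two-step lowering never reaches level `n + 1`
  have low : ∀ (i : Fin d) (l : ℕ), l < n → ∀ p ∈ P l, π (n + 1) (X i * p) = 0 := by
    intro i l hl p hp
    obtain ⟨a, ha, b, hb, c, hc, h⟩ := dec i l p hp
    have hc0 : π (n + 1) c = 0 := by
      rcases hc with rfl | ⟨r, hr, hc⟩
      · simp
      · exact hπ0 _ r (by omega) _ hc
    rw [h, map_add, map_add, hπ0 _ _ (by omega) _ ha, hπ0 _ _ (by omega) _ hb, hc0]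
    simp
  have key : ∀ i i' : Fin d, π (n + 1) (X i * π (n + 1) (X i' * q)) +
      π (n + 1) (X i * π n (X i' * q)) = π (n + 1) (X i * (X i' * q)) := by
    intro i i'
    obtain ⟨a, ha, b, hb, c, hc, h⟩ := dec i' n q hq
    have hc0 : π (n + 1) c = 0 ∧ π n c = 0 ∧ π (n + 1) (X i * c) = 0 := by
      rcases hc with rfl | ⟨r, hr, hc⟩
      · simp
      · exact ⟨hπ0 _ r (by omega) _ hc, hπ0 _ r (by omega) _ hc, low i r (by omega) c hc⟩
    have h1 : π (n + 1) (X i' * q) = a := by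
      rw [h, map_add, map_add, hπid _ _ ha, hπ0 _ _ (by omega) _ hb, hc0.1]
      simp
    have h2 : π n (X i' * q) = b := by
      rw [h, map_add, map_add, hπid _ _ hb, hπ0 _ _ (by omega) _ ha, hc0.2.1]
      simp
    rw [h1, h2, h, mul_add, mul_add, map_add, map_add, hc0.2.2, add_zero]
  rw [key j k, key k j, mul_left_comm]
end

section
/- Let (𝒫_k)_{k∈ℕ} be an independent family of submodules of 𝒫 with ⨆_k 𝒫_k = 𝒫, such that for all j ∈ {1,…,d} and all m ∈ ℕ one has X_j·𝒫_m ⊆ 𝒫_{m+1} ⊔ 𝒫_m ⊔ 𝒫_{m-1} (with 𝒫_{-1} = 0), and let π_k denote the projection onto 𝒫_k along this decomposition. Then for all j, k ∈ {1,…,d}, all n ∈ ℕ and all q ∈ 𝒫_n: π_n(X_j·π_{n+1}(X_k·q)) + π_n(X_j·π_n(X_k·q)) + π_n(X_j·π_{n-1}(X_k·q)) = π_n(X_k·π_{n+1}(X_j·q)) + π_n(X_k·π_n(X_j·q)) + π_n(X_k·π_{n-1}(X_j·q)). (This is the relation [a⁺_j, a⁻_k] + [a⁰_j, a⁰_k]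 + [a⁻_j, a⁺_k] = 0.) -/
open MvPolynomial

/-- The relation `[a⁺_j, a⁻_k] + [a⁰_j, a⁰_k] + [a⁻_j, a⁺_k] = 0`, with respect to a
direct sum decomposition `𝒫 = ⊕_k 𝒫_k` such that each
`X_j·𝒫_m ⊆ 𝒫_{m+1} ⊔ 𝒫_m ⊔ 𝒫_{m-1}`, `π_k` being the projections (and `π_{-1} := 0`). -/
theorem stmt_15 (d : ℕ) (hd : 1 ≤ d)
    (P : ℕ → Submodule ℂ (MvPolynomial (Fin d) ℂ))
    (hind : iSupIndep P) (hsup : (⨆ k, P k) = ⊤)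
    (hjac : ∀ (j : Fin d) (m : ℕ), ∀ p ∈ P m,
      X j * p ∈ P (m + 1) ⊔ P m ⊔
        (if m = 0 then (⊥ : Submodule ℂ (MvPolynomial (Fin d) ℂ)) else P (m - 1)))
    (π : ℕ → MvPolynomial (Fin d) ℂ →ₗ[ℂ] MvPolynomial (Fin d) ℂ)
    (hπmem : ∀ k p, π k p ∈ P k)
    (hπid : ∀ k, ∀ p ∈ P k, π k p = p)
    (hπ0 : ∀ k l, k ≠ l → ∀ p ∈ P l, π k p = 0)
    (j k : Fin d) (n : ℕ) (q : MvPolynomial (Fin d) ℂ) (hq : q ∈ P n) :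
    π n (X j * π (n + 1) (X k * q)) + π n (X j * π n (X k * q)) +
        π n (X j * (if n = 0 then 0 else π (n - 1) (X k * q))) =
      π n (X k * π (n + 1) (X j * q)) + π n (X k * π n (X j * q)) +
        π n (X k * (if n = 0 then 0 else π (n - 1) (X j * q))) := by
  have key : ∀ i : Fin d, π (n + 1) (X i * q) + π n (X i * q) +
      (if n = 0 then 0 else π (n - 1) (X i * q)) = X i * q := by
    intro i
    obtain ⟨y, hy, c, hc, h⟩ := Submodule.mem_sup.1 (hjac i n q hq)
    obtain ⟨a, ha, b, hb, rfl⟩ := Submodule.mem_sup.1 hy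
    rw [← h]
    by_cases hn : n = 0
    · rw [if_pos hn] at hc
      have hc0 : c = 0 := by simpa using hc
      subst hc0
      simp only [map_add, map_zero, if_pos hn]
      rw [hπid _ a ha, hπid _ b hb, hπ0 (n + 1) n (by omega) b hb,
        hπ0 n (n + 1) (by omega) a ha]
      simp
    · rw [if_neg hn] at hc
      simp only [map_add, if_neg hn]
      rw [hπid _ a ha, hπid _ b hb, hπid _ c hc, hπ0 (n + 1) n (by omega) b hb,
        hπ0 n (n + 1) (by omega) a ha, hπ0 (n + 1) (n - 1) (by omega) c hc,
        hπ0 n (n - 1) (by omega) c hc, hπ0 (n - 1) (n + 1) (by omega) a ha,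
        hπ0 (n - 1) n (by omega) b hb]
      simp
  rw [← map_add, ← map_add, ← map_add, ← map_add, ← mul_add, ← mul_add, ← mul_add, ← mul_add,
    key, key, mul_left_comm]
end
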